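/- There is a one-to-one correspondence between (isomorphism classes of) covariant first order differential calculi (Γ, d) on X satisfying the freeness condition d a = Σ_i ∂_i(a) d e^i with unique coefficients, and subsets {χ_1,…,χ_M} of the restricted dual X° such that: span{ε, χ_1,…,χ_M} is a right coideal of X°, χ_i(e^j) = δ_{ij}, χ_i(1) = 0, and the operators ∂_i(a) := Σ_j a_{(1)} χ_j(a_{(2)}) S(π^j_i) map X into X. The correspondence sends (Γ, d) to {ε∘∂_1,…,ε∘∂_M}. -/

import Mathlib

open TensorProduct MulOpposite

/-- Membership in the restricted dual. -/
def InRestrictedDual {A : Type} [Ring A] [Algebra ℂ A] (f : A →ₗ[ℂ] ℂ) : Prop :=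
  ∃ (n : ℕ) (g h : Fin n → (A →ₗ[ℂ] ℂ)), ∀ a b : A, f (a * b) = ∑ k, g k a * h k b

/-- A covariant first order differential calculus on a left coideal subalgebra `X ⊆ H`,
satisfying the freeness condition with respect to `e : Fin M → X`. -/
structure CovCalc {H : Type} [Ring H] [HopfAlgebra ℂ H] (X : Subalgebra ℂ H)
    (comulX : X →ₗ[ℂ] H ⊗[ℂ] X) {M : ℕ} (e : Fin M → X) where
  Γ : Type
  [grp : AddCommGroup Γ]
  [modC : Module ℂ Γ]
  [modL : Module X Γ]
  [modR : Module Xᵐᵒᵖ Γ]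
  [comm : SMulCommClass X Xᵐᵒᵖ Γ]
  [tower : IsScalarTower ℂ X Γ]
  d : X →ₗ[ℂ] Γ
  leibniz : ∀ a b : X, d (a * b) = a • d b + op b • d a
  spanning : Submodule.span ℂ {x : Γ | ∃ a b : X, x = a • d b} = ⊤
  free : ∀ ω : Γ, ∃! c : Fin M → X, ω = ∑ i, c i • d (e i)
  covariant : ∃ ΔΓ : Γ →ₗ[ℂ] H ⊗[ℂ] Γ,
    ∀ (a b : X) (ι κ : Type) (_ : Fintype ι) (_ : Fintype κ)
      (a1 : ι → H) (a2 : ι → X) (b1 : κ → H) (b2 : κ → X),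
      comulX a = ∑ t, a1 t ⊗ₜ[ℂ] a2 t → comulX b = ∑ s, b1 s ⊗ₜ[ℂ] b2 s →
      ΔΓ (a • d b) = ∑ t, ∑ s, (a1 t * b1 s) ⊗ₜ[ℂ] (a2 t • d (b2 s))

attribute [instance] CovCalc.grp CovCalc.modC CovCalc.modL CovCalc.modR
  CovCalc.comm CovCalc.tower

variable {H : Type} [Ring H] [HopfAlgebra ℂ H] {X : Subalgebra ℂ H}
  {comulX : X →ₗ[ℂ] H ⊗[ℂ] X} {M : ℕ} {e : Fin M → X}

/-- Isomorphism of two such calculi. -/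
def CovCalc.Iso (c c' : CovCalc X comulX e) : Prop :=
  ∃ φ : c.Γ ≃ₗ[ℂ] c'.Γ,
    (∀ a : X, φ (c.d a) = c'.d a) ∧
    (∀ (a : X) (x : c.Γ), φ (a • x) = a • φ x) ∧
    (∀ (a : X) (x : c.Γ), φ (op a • x) = op a • φ x)

/-- The conditions on a family `{χ_1, …, χ_M} ⊆ X°` in the classification theorem. -/
def GoodChi (X : Subalgebra ℂ H) (comulX : X →ₗ[ℂ] H ⊗[ℂ] X)
    (e : Fin M → X) (π : Fin M → Fin M → H) (χ : Fin M → (X →ₗ[ℂ] ℂ)) : Prop :=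
  -- χ_i(e^j) = δ_ij and χ_i(1) = 0
  (∀ i j, χ i (e j) = if i = j then 1 else 0) ∧ (∀ i, χ i 1 = 0) ∧
  -- span{ε, χ_1, …, χ_M} is a right coideal of X°
  (∀ f : X →ₗ[ℂ] ℂ,
    f ∈ Submodule.span ℂ
      ({(Coalgebra.counit (R := ℂ)).comp X.val.toLinearMap} ∪ Set.range χ) →
    ∃ (n : ℕ) (g h : Fin n → (X →ₗ[ℂ] ℂ)),
      (∀ k, g k ∈ Submodule.span ℂ
        ({(Coalgebra.counit (R := ℂ)).comp X.val.toLinearMap} ∪ Set.range χ)) ∧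
      (∀ k, InRestrictedDual (h k)) ∧
      (∀ a b : X, f (a * b) = ∑ k, g k a * h k b)) ∧
  -- the operators ∂_i(a) = a₍₁₎ χ_j(a₍₂₎) S(π^j_i) map X into X
  (∀ (a : X) (i : Fin M) (ι : Type) (_ : Fintype ι) (a1 : ι → H) (a2 : ι → X),
    comulX a = ∑ t, a1 t ⊗ₜ[ℂ] a2 t →
    (∑ t, ∑ j, χ j (a2 t) • (a1 t * HopfAlgebra.antipode (R := ℂ) (π j i))) ∈ X)

/-- The correspondence: `χ_i = ε ∘ ∂_i`, where `∂_i` are the coefficient operators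
of the calculus `c`. -/
def Corr (c : CovCalc X comulX e) (χ : Fin M → (X →ₗ[ℂ] ℂ)) : Prop :=
  ∀ (a : X) (co : Fin M → X), c.d a = ∑ i, co i • c.d (e i) →
    ∀ i, χ i a = Coalgebra.counit (R := ℂ) ((co i : H))

/-!
The Leibniz rule makes the coefficient operators `∂ = (∂_i)` of a calculus a twisted derivation
`∂ (a b) = a ∂ b + ∂ a · G b`. Because `∂ (e k)` is the `k`-th unit vector, the matrix `G` is
determined by `∂` and is multiplicative, so it encodes the right action on `Γ = X^M`. Applying `ε`
makes `χ = ε ∘ ∂` a twisted derivation over `ε`, and this is the right coideal condition on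
`span {ε, χ_1, …, χ_M}`: the coproduct of `χ_i` is `ε ⊗ χ_i + ∑ k, χ_k ⊗ (ε ∘ G_{ki})`.

Covariance recovers `∂` from `χ`: applying `id ⊗ ε` to the coaction of `d a = ∑ i, ∂_i a d e_i`
gives `∑ i, ∂_i(a) π i j = a₍₁₎ χ_j(a₍₂₎)`, and the antipode inverts the matrix `π`. Conversely, for
a good family the operators `∂` so defined form a twisted derivation, because slicing the algebra
map `Δ` along a twisted derivation gives one and multiplying by the invertible matrix `S π`
preserves the property.
-/

open scoped Matrix

section TwistedDerivation

variable {A B C ι : Type*} [Fintype ι]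

/-- A family `D = (D_i)` of maps `A → B` satisfying the Leibniz rule
`D_i (a b) = φ a * D_i b + ∑ k, D_k a * G_{ki} b`, where the row vector `D a` is twisted on the
right by the matrix `G b`. -/
def IsTwistedDerivation [Mul A] [Semiring B] (φ : A → B) (D : A → ι → B)
    (G : A → Matrix ι ι B) : Prop :=
  ∀ a b, D (a * b) = φ a • D b + D a ᵥ* G b

namespace IsTwistedDerivation

theorem comp [Mul A] [Mul C] [Semiring B] {φ : A → B} {D : A → ι → B} {G : A → Matrix ι ι B}
    (h : IsTwistedDerivation φ D G) {F : Type*} [FunLike F C A] [MulHomClass F C A] (f : F) :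
    IsTwistedDerivation (φ ∘ f) (D ∘ f) (G ∘ f) := fun a b => by
  simp only [Function.comp_apply, map_mul, h (f a) (f b)]

theorem map [Mul A] [Semiring B] [Semiring C] {φ : A → B} {D : A → ι → B}
    {G : A → Matrix ι ι B} (h : IsTwistedDerivation φ D G) (f : B →+* C) :
    IsTwistedDerivation (f ∘ φ) (fun a => f ∘ D a) fun b => (G b).map f := fun a b => by
  ext i
  simp only [Function.comp_apply, Pi.add_apply, Pi.smul_apply, smul_eq_mul, h a b, map_add,
    map_mul, RingHom.map_vecMul]

theorem vecMul [Mul A] [Semiring B] [DecidableEq ι] {φ : A → B} {D : A → ι → B}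
    {G : A → Matrix ι ι B} (h : IsTwistedDerivation φ D G) {P Q : Matrix ι ι B}
    (hPQ : P * Q = 1) :
    IsTwistedDerivation φ (fun a => D a ᵥ* P) fun b => Q * G b * P := fun a b => by
  have hG : P * (Q * G b * P) = G b * P := by
    rw [← mul_assoc, ← mul_assoc, hPQ, one_mul]
  simp only [h a b, Matrix.add_vecMul, Matrix.smul_vecMul, Matrix.vecMul_vecMul, hG]

variable [DecidableEq ι]

theorem row_eq_sub [Mul A] [Ring B] {φ : A → B} {D : A → ι → B} {G : A → Matrix ι ι B}
    (h : IsTwistedDerivation φ D G) {e : ι → A} (he : ∀ k, D (e k) = Pi.single k 1)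
    (b : A) (k : ι) : G b k = D (e k * b) - φ (e k) • D b := by
  rw [h, he, Matrix.single_one_vecMul, add_sub_cancel_left]
  rfl

theorem of_injective_comp [Mul A] [Ring B] [Ring C] {φ : A → B} {D : A → ι → B}
    {f : B →+* C} (hf : Function.Injective f) {G : A → Matrix ι ι C}
    (h : IsTwistedDerivation (f ∘ φ) (fun a => f ∘ D a) G) {e : ι → A}
    (he : ∀ k, D (e k) = Pi.single k 1) :
    IsTwistedDerivation φ D fun b => Matrix.of fun k => D (e k * b) - φ (e k) • D b := by
  have he' (k : ι) : f ∘ D (e k) = Pi.single k 1 := by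
    ext i
    simp [he, Pi.single_apply, apply_ite f]
  have hG (b : A) : (Matrix.of fun k => D (e k * b) - φ (e k) • D b).map f = G b := by
    ext k i
    simp [congrFun (h.row_eq_sub he' b k) i]
  intro a b
  refine hf.comp_left ?_
  ext i
  rw [h a b, ← hG]
  simp [RingHom.map_vecMul]

/-- Since the vectors `D (e k)` are the standard basis, the matrices `G b` are determined by the
Leibniz rule, and evaluating `D (a * (b * c))` in two ways makes `G` multiplicative. -/
theorem exists_algHom {R : Type*} [CommRing R] [Ring A] [Algebra R A] [Ring B] [Algebra R B]
    {F : Type*} [FunLike F A B] [MulHomClass F A B] {φ : F} {D : A →ₗ[R] ι → B}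
    {G : A → Matrix ι ι B} (h : IsTwistedDerivation φ D G) {e : ι → A}
    (he : ∀ k, D (e k) = Pi.single k 1) (h_one : D 1 = 0) :
    ∃ G' : A →ₐ[R] Matrix ι ι B, ⇑G' = G := by
  have cancel {P Q : Matrix ι ι B} (hPQ : ∀ a, D a ᵥ* P = D a ᵥ* Q) : P = Q :=
    Matrix.ext_of_single_vecMul fun k => he k ▸ hPQ (e k)
  have G_add (b c : A) : G (b + c) = G b + G c := cancel fun a => by
    refine add_left_cancel (a := φ a • D (b + c)) ?_
    rw [← h, mul_add, map_add, map_add, h, h, Matrix.vecMul_add, smul_add]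
    abel
  have G_smul (r : R) (b : A) : G (r • b) = r • G b := cancel fun a => by
    refine add_left_cancel (a := φ a • D (r • b)) ?_
    rw [← h, mul_smul_comm, map_smul, map_smul, h, Matrix.vecMul_smul, smul_add,
      smul_comm r (φ a)]
  have G_one : G 1 = 1 := cancel fun a => by
    simpa [h_one] using (h a 1).symm
  have G_mul (b c : A) : G (b * c) = G b * G c := cancel fun a => by
    refine add_left_cancel (a := φ a • D (b * c)) ?_
    rw [← h, ← mul_assoc, h (a * b), h a b, h b c, map_mul φ, Matrix.add_vecMul,
      Matrix.smul_vecMul, Matrix.vecMul_vecMul, smul_add, smul_smul, add_assoc]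
  exact ⟨AlgHom.ofLinearMap ⟨⟨G, G_add⟩, G_smul⟩ G_one G_mul, rfl⟩

end IsTwistedDerivation

end TwistedDerivation

section RightCoideal

variable {A : Type} [Ring A] [Algebra ℂ A]

/-- A subspace of the restricted dual that is a right coideal: the coproduct of each of its
elements, i.e. its precomposition with multiplication, lies in `V ⊗ A°`. -/
def IsRightCoideal (V : Submodule ℂ (A →ₗ[ℂ] ℂ)) : Prop :=
  ∀ f ∈ V, ∃ (n : ℕ) (g h : Fin n → (A →ₗ[ℂ] ℂ)),
    (∀ k, g k ∈ V) ∧ (∀ k, InRestrictedDual (h k)) ∧ ∀ a b, f (a * b) = ∑ k, g k a * h k b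

theorem exists_eq_smul_add_sum_of_mem_span {R N ι : Type*} [Semiring R] [AddCommMonoid N]
    [Module R N] [Fintype ι] {x y : N} {v : ι → N}
    (hy : y ∈ Submodule.span R ({x} ∪ Set.range v)) :
    ∃ (α : R) (β : ι → R), y = α • x + ∑ i, β i • v i := by
  obtain ⟨α, z, hz, rfl⟩ := Submodule.mem_span_insert.1 (Set.singleton_union ▸ hy)
  obtain ⟨β, rfl⟩ := (Submodule.mem_span_range_iff_exists_fun R).1 hz
  exact ⟨α, β, rfl⟩

variable {M : ℕ} {ε : A →ₐ[ℂ] ℂ} {χ : Fin M → (A →ₗ[ℂ] ℂ)}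

theorem inRestrictedDual_mulVec_apply (G : A →ₐ[ℂ] Matrix (Fin M) (Fin M) ℂ) (β : Fin M → ℂ)
    {h : A →ₗ[ℂ] ℂ} {k : Fin M} (hh : ∀ b, h b = (G b *ᵥ β) k) : InRestrictedDual h := by
  let entry (k l : Fin M) : A →ₗ[ℂ] ℂ := Matrix.entryLinearMap ℂ ℂ k l ∘ₗ G.toLinearMap
  refine ⟨M, entry k, fun l => ∑ i, β i • entry l i, fun a b => ?_⟩
  rw [hh, map_mul, ← Matrix.mulVec_mulVec]
  simp [entry, Matrix.mulVec, dotProduct, mul_comm]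

theorem IsTwistedDerivation.isRightCoideal {G : A →ₐ[ℂ] Matrix (Fin M) (Fin M) ℂ}
    (h : IsTwistedDerivation ε (fun a i => χ i a) G) :
    IsRightCoideal (Submodule.span ℂ ({ε.toLinearMap} ∪ Set.range χ)) := by
  intro f hf
  obtain ⟨α, β, rfl⟩ := exists_eq_smul_add_sum_of_mem_span hf
  set f := α • ε.toLinearMap + ∑ i, β i • χ i with f_def
  let q (k : Fin M) : A →ₗ[ℂ] ℂ := ∑ i, β i • Matrix.entryLinearMap ℂ ℂ k i ∘ₗ G.toLinearMap
  let g : Fin (M + 1) → (A →ₗ[ℂ] ℂ) := Fin.cons ε.toLinearMap χ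
  have hq (k : Fin M) (b : A) : q k b = (G b *ᵥ β) k := by
    simp [q, Matrix.mulVec, dotProduct, mul_comm]
  have hf_apply (a : A) : f a = α * ε a + (fun i => χ i a) ⬝ᵥ β := by
    simp [f_def, dotProduct, mul_comm]
  have hχ (a b : A) : (fun i => χ i (a * b)) =
      ε a • (fun i => χ i b) + (fun i => χ i a) ᵥ* G b := h a b
  have hmul (a b : A) : f (a * b) = ∑ k, g k a * (Fin.cons f q : Fin (M + 1) → _) k b := by
    calc f (a * b) = ε a * f b + (fun i => χ i a) ⬝ᵥ (G b *ᵥ β) := by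
          rw [hf_apply, hf_apply, hχ, map_mul, add_dotProduct, smul_dotProduct,
            Matrix.dotProduct_mulVec, smul_eq_mul]
          ring
      _ = _ := by simp [g, Fin.sum_univ_succ, hq, dotProduct]
  refine ⟨M + 1, g, Fin.cons f q, fun k => Submodule.subset_span ?_, fun k => ?_, hmul⟩
  · cases k using Fin.cases with
    | zero => exact Or.inl rfl
    | succ k => exact Or.inr ⟨k, rfl⟩
  · cases k using Fin.cases with
    | zero => exact ⟨M + 1, g, Fin.cons f q, hmul⟩
    | succ k => exact inRestrictedDual_mulVec_apply G β (hq k)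

theorem IsRightCoideal.exists_apply_mul_eq
    (hV : IsRightCoideal (Submodule.span ℂ ({ε.toLinearMap} ∪ Set.range χ)))
    {f : A →ₗ[ℂ] ℂ} (hf : f ∈ Submodule.span ℂ ({ε.toLinearMap} ∪ Set.range χ)) :
    ∃ (p : A → ℂ) (q : Fin M → A → ℂ), ∀ a b, f (a * b) = ε a * p b + ∑ k, χ k a * q k b := by
  obtain ⟨n, g, h, hg, -, hgh⟩ := hV f hf
  choose α β hαβ using fun t => exists_eq_smul_add_sum_of_mem_span (hg t)
  refine ⟨fun b => ∑ t, α t * h t b, fun k b => ∑ t, β t k * h t b, fun a b => ?_⟩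
  have hg_apply (t : Fin n) : g t a = α t * ε a + ∑ k, β t k * χ k a := by simp [hαβ t]
  simp only [hgh, hg_apply, add_mul, Finset.sum_add_distrib, Finset.sum_mul, Finset.mul_sum]
  rw [Finset.sum_comm (f := fun t k => β t k * χ k a * h t b)]
  simp only [mul_left_comm, mul_assoc]

/-- Evaluating the coideal expansion of `χ i (1 * b)` identifies the coefficient of `ε` as `χ i`
itself. -/
theorem IsRightCoideal.exists_isTwistedDerivation
    (hV : IsRightCoideal (Submodule.span ℂ ({ε.toLinearMap} ∪ Set.range χ)))
    (h_one : ∀ i, χ i 1 = 0) :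
    ∃ G : A → Matrix (Fin M) (Fin M) ℂ, IsTwistedDerivation ε (fun a i => χ i a) G := by
  choose p q hpq using fun i =>
    hV.exists_apply_mul_eq (Submodule.subset_span (Or.inr (Set.mem_range_self (f := χ) i)))
  have hp (i : Fin M) (b : A) : χ i b = p i b := by simpa [h_one] using hpq i 1 b
  refine ⟨fun b => Matrix.of fun k i => q i k b, fun a b => funext fun i => ?_⟩
  simp only [hpq i a b, hp i b, Pi.add_apply, Pi.smul_apply, smul_eq_mul, Matrix.vecMul,
    dotProduct, Matrix.of_apply]

end RightCoideal

section TensorSlice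

variable {R V ι : Type*} [CommSemiring R] [Fintype ι]

/-- The slice map `id ⊗ f : A ⊗ V → A ⊗ R = A` of a linear form `f` on `V`; applied to a coaction
`δ`, it gives `a ↦ f (a₍₂₎) a₍₁₎`. -/
def tensorSlice (A : Type*) [AddCommMonoid A] [Module R A] [AddCommMonoid V] [Module R V]
    (f : V →ₗ[R] R) : A ⊗[R] V →ₗ[R] A :=
  TensorProduct.rid R A ∘ₗ f.lTensor A

@[simp]
theorem tensorSlice_tmul {A : Type*} [AddCommMonoid A] [Module R A] [AddCommMonoid V] [Module R V]
    (f : V →ₗ[R] R) (a : A) (v : V) : tensorSlice A f (a ⊗ₜ v) = f v • a := by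
  simp [tensorSlice]

theorem IsTwistedDerivation.tensorSlice (A : Type*) [Semiring A] [Algebra R A] {B : Type*}
    [Semiring B] [Algebra R B] {ε : B →ₗ[R] R} {χ : ι → (B →ₗ[R] R)}
    {G : B →ₗ[R] Matrix ι ι R} (h : IsTwistedDerivation ε (fun b i => χ i b) G) :
    IsTwistedDerivation (tensorSlice A ε) (fun z i => tensorSlice A (χ i) z)
      fun z => Matrix.of fun k i => tensorSlice A (Matrix.entryLinearMap R R k i ∘ₗ G) z := by
  intro z w
  ext i
  have hχ (b b' : B) : χ i (b * b') = ε b * χ i b' + ∑ k, χ k b * G b' k i := congrFun (h b b') i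
  simp only [Pi.add_apply, Pi.smul_apply, smul_eq_mul, Matrix.vecMul, dotProduct,
    Matrix.of_apply]
  induction z with
  | zero => simp
  | add z z' hz hz' =>
    simp only [add_mul, map_add, hz, hz', Finset.sum_add_distrib]
    abel
  | tmul a b =>
    induction w with
    | zero => simp
    | add w w' hw hw' =>
      simp only [mul_add, map_add, hw, hw', Finset.sum_add_distrib]
      abel
    | tmul a' b' =>
      simp [hχ, add_smul, Finset.sum_smul, smul_smul, mul_comm]

end TensorSlice

section MatrixCorepresentation

variable {R A ι : Type*} [CommSemiring R] [Fintype ι] [DecidableEq ι]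

/-- A square matrix of elements of a coalgebra with `Δ (π i j) = ∑ k, π i k ⊗ π k j` and
`ε (π i j) = δ_{ij}`, i.e. the matrix of coefficients of a finite-dimensional comodule. -/
structure IsMatrixCorepresentation (R : Type*) [CommSemiring R] [AddCommMonoid A] [Module R A]
    [Coalgebra R A] (π : Matrix ι ι A) : Prop where
  comul_apply (i j : ι) : Coalgebra.comul (R := R) (π i j) = ∑ k, π i k ⊗ₜ π k j
  counit_apply (i j : ι) : Coalgebra.counit (R := R) (π i j) = if i = j then 1 else 0

namespace IsMatrixCorepresentation

variable [Semiring A] [HopfAlgebra R A] {π : Matrix ι ι A}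

theorem mul_map_antipode (h : IsMatrixCorepresentation R π) :
    π * π.map (HopfAlgebra.antipode R) = 1 := by
  ext i j
  simpa [h.comul_apply, h.counit_apply, Matrix.mul_apply, Matrix.one_apply,
    apply_ite (algebraMap R A)] using HopfAlgebra.mul_antipode_lTensor_comul_apply (R := R) (π i j)

theorem map_antipode_mul (h : IsMatrixCorepresentation R π) :
    π.map (HopfAlgebra.antipode R) * π = 1 := by
  ext i j
  simpa [h.comul_apply, h.counit_apply, Matrix.mul_apply, Matrix.one_apply,
    apply_ite (algebraMap R A)] using HopfAlgebra.mul_antipode_rTensor_comul_apply (R := R) (π i j)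

theorem map_comul (h : IsMatrixCorepresentation R π) :
    π.map (Bialgebra.comulAlgHom R A) =
      π.map (Algebra.TensorProduct.includeLeft : A →ₐ[R] A ⊗[R] A) *
        π.map (Algebra.TensorProduct.includeRight : A →ₐ[R] A ⊗[R] A) := by
  ext i j
  simp [h.comul_apply, Matrix.mul_apply]

theorem map_antipode_map_counit (h : IsMatrixCorepresentation R π) :
    (π.map (HopfAlgebra.antipode R)).map (Bialgebra.counitAlgHom R A) = 1 := by
  ext i j
  simp [h.counit_apply, Matrix.one_apply]

end IsMatrixCorepresentation

end MatrixCorepresentation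

section ComulRestriction

variable {R A : Type*} [CommRing R] [Ring A] [Bialgebra R A] {B : Subalgebra R A}

/-- `δ` is the corestriction of the comultiplication of `A` to the left coideal subalgebra `B`. -/
def IsComulRestriction (δ : B →ₗ[R] A ⊗[R] B) : Prop :=
  ∀ a, TensorProduct.map LinearMap.id B.val.toLinearMap (δ a) = Coalgebra.comul (R := R) (a : A)

theorem injective_map_id_val [Module.Flat R A] :
    Function.Injective (Algebra.TensorProduct.map (AlgHom.id R A) B.val) :=
  Module.Flat.lTensor_preserves_injective_linearMap B.val.toLinearMap Subtype.val_injective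

namespace IsComulRestriction

variable {δ : B →ₗ[R] A ⊗[R] B} (hδ : IsComulRestriction δ)

include hδ

theorem lTensor_val_comp :
    B.val.toLinearMap.lTensor A ∘ₗ δ = Coalgebra.comul ∘ₗ B.val.toLinearMap :=
  LinearMap.ext hδ

theorem lTensor_val_apply (a : B) :
    B.val.toLinearMap.lTensor A (δ a) = Coalgebra.comul (R := R) (a : A) :=
  hδ a

theorem map_id_val (a : B) :
    Algebra.TensorProduct.map (AlgHom.id R A) B.val (δ a) = Bialgebra.comulAlgHom R A a :=
  hδ a

theorem exists_algHom [Module.Flat R A] : ∃ δ' : B →ₐ[R] A ⊗[R] B, ⇑δ' = δ :=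
  ⟨AlgHom.ofLinearMap δ
    (injective_map_id_val (by simp only [hδ.map_id_val, map_one, OneMemClass.coe_one]))
    fun a b => injective_map_id_val (by simp only [map_mul, hδ.map_id_val, MulMemClass.coe_mul]),
    rfl⟩

theorem tensorSlice_counit (a : B) :
    tensorSlice A ((Bialgebra.counitAlgHom R A).comp B.val).toLinearMap (δ a) = a := by
  calc _ = TensorProduct.rid R A ((Coalgebra.counit (R := R)).lTensor A
        (B.val.toLinearMap.lTensor A (δ a))) := by
        rw [← LinearMap.lTensor_comp_apply]
        rfl
    _ = a := by rw [hδ.lTensor_val_apply, Coalgebra.lTensor_counit_comul, TensorProduct.rid_tmul,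
      one_smul]

theorem lid_rTensor_counit (a : B) :
    TensorProduct.lid R B ((Coalgebra.counit (R := R)).rTensor B (δ a)) = a := by
  refine Subtype.val_injective ?_
  calc B.val.toLinearMap (TensorProduct.lid R B ((Coalgebra.counit (R := R)).rTensor B (δ a)))
      = TensorProduct.lid R A ((Coalgebra.counit (R := R)).rTensor A
          (B.val.toLinearMap.lTensor A (δ a))) := by
        induction δ a with
        | zero => simp
        | add z w hz hw => simp only [map_add, hz, hw]
        | tmul x b => simp
    _ = a := by rw [hδ.lTensor_val_apply, Coalgebra.rTensor_counit_comul, TensorProduct.lid_tmul,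
      one_smul]

theorem assoc_rTensor_comul [Module.Flat R A] (a : B) :
    TensorProduct.assoc R A A B (Coalgebra.comul.rTensor B (δ a)) = δ.lTensor A (δ a) := by
  refine Module.Flat.lTensor_preserves_injective_linearMap (M := A) (B.val.toLinearMap.lTensor A)
    injective_map_id_val ?_
  calc _ = TensorProduct.assoc R A A A (Coalgebra.comul.rTensor A
        (B.val.toLinearMap.lTensor A (δ a))) := by
        rw [← LinearMap.comp_apply (LinearMap.rTensor A _), LinearMap.rTensor_comp_lTensor,
          ← LinearMap.lTensor_comp_rTensor, LinearMap.comp_apply, LinearMap.lTensor_tensor]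
        simp
    _ = Coalgebra.comul.lTensor A (B.val.toLinearMap.lTensor A (δ a)) := by
        rw [hδ.lTensor_val_apply, Coalgebra.coassoc_apply]
    _ = _ := by
        rw [← LinearMap.lTensor_comp_apply, ← LinearMap.lTensor_comp_apply, hδ.lTensor_val_comp]

theorem counit_tensorSlice (f : B →ₗ[R] R) (a : B) :
    Coalgebra.counit (R := R) (tensorSlice A f (δ a)) = f a := by
  calc _ = f (TensorProduct.lid R B ((Coalgebra.counit (R := R)).rTensor B (δ a))) := by
        induction δ a with
        | zero => simp
        | add z w hz hw => simp only [map_add, hz, hw]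
        | tmul x b => simp [mul_comm]
    _ = f a := by rw [hδ.lid_rTensor_counit]

theorem comul_tensorSlice [Module.Flat R A] (f : B →ₗ[R] R) (a : B) :
    Coalgebra.comul (R := R) (tensorSlice A f (δ a)) =
      (tensorSlice A f ∘ₗ δ).lTensor A (δ a) := by
  calc _ = (tensorSlice A f).lTensor A
        (TensorProduct.assoc R A A B (Coalgebra.comul.rTensor B (δ a))) := by
        induction δ a with
        | zero => simp
        | add z w hz hw => simp only [map_add, hz, hw]
        | tmul x b =>
          simp only [tensorSlice_tmul, map_smul, LinearMap.rTensor_tmul]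
          induction Coalgebra.comul (R := R) x with
          | zero => simp
          | add z w hz hw => simp only [map_add, TensorProduct.add_tmul, smul_add, hz, hw]
          | tmul y z => simp
    _ = _ := by rw [hδ.assoc_rTensor_comul, LinearMap.lTensor_comp_apply]

end IsComulRestriction

end ComulRestriction

section PartialDeriv

variable {R A V ι : Type*} [Fintype ι]

/-- The operators `∂_i a = ∑ j, a₍₁₎ χ_j (a₍₂₎) S (π j i)` attached to a coaction `δ`, linear forms
`χ_j` and a matrix `π`, collected into a row vector. -/
def partialDeriv [CommSemiring R] [Semiring A] [HopfAlgebra R A] [AddCommMonoid V] [Module R V]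
    (δ : V →ₗ[R] A ⊗[R] V) (χ : ι → (V →ₗ[R] R)) (π : Matrix ι ι A) : V →ₗ[R] ι → A :=
  LinearMap.pi fun i => ∑ j, LinearMap.mulRight R (HopfAlgebra.antipode R (π j i)) ∘ₗ
    tensorSlice A (χ j) ∘ₗ δ

section Coaction

variable [CommSemiring R] [Semiring A] [HopfAlgebra R A] [AddCommMonoid V] [Module R V]
  {δ : V →ₗ[R] A ⊗[R] V} {χ : ι → (V →ₗ[R] R)} {π : Matrix ι ι A}

theorem partialDeriv_eq_vecMul (a : V) : partialDeriv δ χ π a =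
    (fun j => tensorSlice A (χ j) (δ a)) ᵥ* π.map (HopfAlgebra.antipode R) := by
  ext i
  simp [partialDeriv, Matrix.vecMul, dotProduct]

theorem partialDeriv_apply_eq_sum {κ : Type*} [Fintype κ] {a : V} {a1 : κ → A} {a2 : κ → V}
    (h : δ a = ∑ t, a1 t ⊗ₜ a2 t) (i : ι) : partialDeriv δ χ π a i =
      ∑ t, ∑ j, χ j (a2 t) • (a1 t * HopfAlgebra.antipode R (π j i)) := by
  rw [Finset.sum_comm]
  simp [partialDeriv, h]

variable [DecidableEq ι]

theorem eq_partialDeriv_iff (hπ : IsMatrixCorepresentation R π) {u : ι → A} {a : V} :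
    u = partialDeriv δ χ π a ↔ u ᵥ* π = fun j => tensorSlice A (χ j) (δ a) := by
  rw [partialDeriv_eq_vecMul]
  constructor
  · rintro rfl
    rw [Matrix.vecMul_vecMul, hπ.map_antipode_mul, Matrix.vecMul_one]
  · intro h
    rw [← h, Matrix.vecMul_vecMul, hπ.mul_map_antipode, Matrix.vecMul_one]

theorem partialDeriv_vecMul (hπ : IsMatrixCorepresentation R π) (a : V) :
    partialDeriv δ χ π a ᵥ* π = fun j => tensorSlice A (χ j) (δ a) :=
  (eq_partialDeriv_iff hπ).1 rfl

theorem partialDeriv_apply_basis (hπ : IsMatrixCorepresentation R π) {e : ι → V}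
    (he : ∀ k, δ (e k) = ∑ j, π k j ⊗ₜ e j) (hχ : ∀ i j, χ i (e j) = if i = j then 1 else 0)
    (k : ι) : partialDeriv δ χ π (e k) = Pi.single k 1 := by
  refine ((eq_partialDeriv_iff hπ).2 ?_).symm
  ext j
  simp [he, hχ]

end Coaction

section ComulRestriction

variable [CommRing R] [Ring A] [HopfAlgebra R A] {B : Subalgebra R A}
  {δ : B →ₗ[R] A ⊗[R] B} {χ : ι → (B →ₗ[R] R)} {π : Matrix ι ι A}

theorem partialDeriv_one [Module.Flat R A] (hδ : IsComulRestriction δ) (hχ : ∀ i, χ i 1 = 0) :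
    partialDeriv δ χ π 1 = 0 := by
  obtain ⟨δ', hδ'⟩ := hδ.exists_algHom
  have δ_one : δ 1 = 1 ⊗ₜ 1 := hδ' ▸ map_one δ'
  ext i
  simp [partialDeriv, δ_one, hχ]

variable [DecidableEq ι]

theorem counit_partialDeriv (hπ : IsMatrixCorepresentation R π) (hδ : IsComulRestriction δ)
    (a : B) (i : ι) : Coalgebra.counit (R := R) (partialDeriv δ χ π a i) = χ i a := by
  have h := RingHom.map_vecMul (Bialgebra.counitAlgHom R A : A →+* R)
    (π.map (HopfAlgebra.antipode R)) (fun j => tensorSlice A (χ j) (δ a)) i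
  rw [← partialDeriv_eq_vecMul] at h
  refine h.trans ?_
  simp [hδ.counit_tensorSlice, hπ.map_antipode_map_counit]

theorem exists_isTwistedDerivation_partialDeriv [Module.Flat R A]
    (hπ : IsMatrixCorepresentation R π) (hδ : IsComulRestriction δ) {G : B →ₗ[R] Matrix ι ι R}
    (h : IsTwistedDerivation ((Bialgebra.counitAlgHom R A).comp B.val) (fun b i => χ i b) G) :
    ∃ G', IsTwistedDerivation B.val (partialDeriv δ χ π) G' := by
  obtain ⟨δ', hδ'⟩ := hδ.exists_algHom
  have slice := (IsTwistedDerivation.tensorSlice A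
    (ε := ((Bialgebra.counitAlgHom R A).comp B.val).toLinearMap) h).comp δ'
  have val_eq : tensorSlice A ((Bialgebra.counitAlgHom R A).comp B.val).toLinearMap ∘ δ' = B.val :=
    funext fun a => by rw [Function.comp_apply, hδ', hδ.tensorSlice_counit]; rfl
  have partialDeriv_eq : (fun a => (fun j => tensorSlice A (χ j) (δ' a)) ᵥ*
      π.map (HopfAlgebra.antipode R)) = partialDeriv δ χ π :=
    funext fun a => by rw [partialDeriv_eq_vecMul, hδ']
  exact ⟨_, partialDeriv_eq ▸ val_eq ▸ slice.vecMul hπ.map_antipode_mul⟩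

/-- In Sweedler notation, `∑ i, ∂_i(a)₍₁₎ π i j ⊗ ∂_i(a)₍₂₎ = a₍₁₎ ⊗ ∂_j(a₍₂₎)`. -/
theorem comul_partialDeriv_vecMul [Module.Flat R A] (hπ : IsMatrixCorepresentation R π)
    (hδ : IsComulRestriction δ) (a : B) :
    (Bialgebra.comulAlgHom R A ∘ partialDeriv δ χ π a) ᵥ*
        π.map (Algebra.TensorProduct.includeLeft : A →ₐ[R] A ⊗[R] A) =
      fun j => (LinearMap.proj j ∘ₗ partialDeriv δ χ π).lTensor A (δ a) := by
  let inr : A →ₐ[R] A ⊗[R] A := Algebra.TensorProduct.includeRight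
  have inr_mul : π.map inr * (π.map (HopfAlgebra.antipode R)).map inr = 1 := by
    rw [← Matrix.map_mul, hπ.mul_map_antipode, Matrix.map_one _ (map_zero inr) (map_one inr)]
  have comul_slice : (fun k => Coalgebra.comul (R := R) (tensorSlice A (χ k) (δ a))) =
      (Bialgebra.comulAlgHom R A ∘ partialDeriv δ χ π a) ᵥ*
        π.map (Algebra.TensorProduct.includeLeft : A →ₐ[R] A ⊗[R] A) ᵥ* π.map inr := by
    ext k
    rw [Matrix.vecMul_vecMul, ← hπ.map_comul, ← congrFun (partialDeriv_vecMul hπ a) k]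
    exact RingHom.map_vecMul (Bialgebra.comulAlgHom R A : A →+* A ⊗[R] A) π _ k
  have lTensor_mulRight (x : A) (z : A ⊗[R] A) :
      (LinearMap.mulRight R x).lTensor A z = z * inr x := by
    rw [← LinearMap.mulRight_apply (R := R), Algebra.TensorProduct.includeRight_apply,
      LinearMap.mulRight_tmul, LinearMap.mulRight_one]
    rfl
  calc _ = (fun k => Coalgebra.comul (R := R) (tensorSlice A (χ k) (δ a))) ᵥ*
        (π.map (HopfAlgebra.antipode R)).map inr := by
        rw [comul_slice, Matrix.vecMul_vecMul, inr_mul, Matrix.vecMul_one]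
    _ = _ := by
        ext j
        simp only [Matrix.vecMul, dotProduct, hδ.comul_tensorSlice, Matrix.map_apply,
          ← lTensor_mulRight, partialDeriv, LinearMap.proj_pi, ← LinearMap.coe_lTensorHom, map_sum,
          LinearMap.sum_apply]
        simp only [LinearMap.coe_lTensorHom, LinearMap.lTensor_comp_apply]

theorem vecMul_includeLeft_eq_lTensor [Module.Flat R A] (hπ : IsMatrixCorepresentation R π)
    (hδ : IsComulRestriction δ) {D : B →ₗ[R] ι → B}
    (hD : ∀ a i, (D a i : A) = partialDeriv δ χ π a i) (a : B) :
    (δ ∘ D a) ᵥ* π.map (Algebra.TensorProduct.includeLeft : A →ₐ[R] A ⊗[R] B) =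
      fun j => (LinearMap.proj j ∘ₗ D).lTensor A (δ a) := by
  ext j
  refine injective_map_id_val ?_
  have val_D : B.val.toLinearMap ∘ₗ LinearMap.proj j ∘ₗ D =
      LinearMap.proj j ∘ₗ partialDeriv δ χ π := LinearMap.ext fun b => hD b j
  calc _ = ((Bialgebra.comulAlgHom R A ∘ partialDeriv δ χ π a) ᵥ*
          π.map (Algebra.TensorProduct.includeLeft : A →ₐ[R] A ⊗[R] A)) j := by
        simp [Matrix.vecMul, dotProduct, hδ.map_id_val, hD]
    _ = B.val.toLinearMap.lTensor A ((LinearMap.proj j ∘ₗ D).lTensor A (δ a)) := by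
        rw [← LinearMap.lTensor_comp_apply, val_D, comul_partialDeriv_vecMul hπ hδ]

end ComulRestriction

end PartialDeriv

section Construction

/-- The right `A`-module structure on row vectors in which `b` acts through the matrix `G b`. It is
not an instance, because `ι → A` already carries the entrywise action. -/
abbrev twistedRightModule {R A ι : Type*} [CommSemiring R] [Semiring A] [Algebra R A] [Fintype ι]
    [DecidableEq ι] (G : A →ₐ[R] Matrix ι ι A) : Module Aᵐᵒᵖ (ι → A) :=
  Module.compHom (ι → A) (RingHom.op (G : A →+* Matrix ι ι A))

theorem twistedRightModule_smulCommClass {R A ι : Type*} [CommSemiring R] [Semiring A] [Algebra R A]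
    [Fintype ι] [DecidableEq ι] (G : A →ₐ[R] Matrix ι ι A) :
    @SMulCommClass A Aᵐᵒᵖ (ι → A) _ (twistedRightModule G).toSMul :=
  @SMulCommClass.mk _ _ _ _ (twistedRightModule G).toSMul fun a b v =>
    (Matrix.smul_vecMul a v (G b.unop)).symm

theorem exists_leftCoaction {R A B ι : Type*} [Fintype ι] [CommRing R] [Ring A] [Algebra R A]
    [Ring B] [Algebra R B] (δ : B →ₐ[R] A ⊗[R] B) (D : B →ₗ[R] ι → B) (π : Matrix ι ι A)
    (hD : ∀ a, (δ ∘ D a) ᵥ* π.map (Algebra.TensorProduct.includeLeft : A →ₐ[R] A ⊗[R] B) =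
      fun j => (LinearMap.proj j ∘ₗ D).lTensor A (δ a)) :
    ∃ Δ : (ι → B) →ₗ[R] A ⊗[R] (ι → B), ∀ {κ μ : Type} [Fintype κ] [Fintype μ] {a b : B}
      {a1 : κ → A} {a2 : κ → B} {b1 : μ → A} {b2 : μ → B},
      δ a = ∑ t, a1 t ⊗ₜ a2 t → δ b = ∑ s, b1 s ⊗ₜ b2 s →
      Δ (a • D b) = ∑ t, ∑ s, (a1 t * b1 s) ⊗ₜ (a2 t • D (b2 s)) := by
  classical
  let π' := π.map (Algebra.TensorProduct.includeLeft : A →ₐ[R] A ⊗[R] B)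
  let e := TensorProduct.piRight R R A fun _ : ι => B
  refine ⟨e.symm ∘ₗ π'.vecMulLinear.restrictScalars R ∘ₗ δ.toLinearMap.compLeft ι,
    fun {κ μ _ _ a b a1 a2 b1 b2} ha hb => e.injective ?_⟩
  calc _ = (δ ∘ (a • D b)) ᵥ* π' := by simp [e]; rfl
    _ = δ a • ((δ ∘ D b) ᵥ* π') := by
      rw [← Matrix.smul_vecMul]
      congr 1
      ext i
      simp
    _ = e (∑ t, ∑ s, (a1 t * b1 s) ⊗ₜ (a2 t • D (b2 s))) := by
      rw [hD]
      ext j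
      simp [e, ha, hb, Finset.sum_mul_sum]

theorem sum_smul_apply_basis {A B ι : Type*} [Semiring B] [Fintype ι] [DecidableEq ι]
    {D : A → ι → B} {e : ι → A} (he : ∀ k, D (e k) = Pi.single k 1) (v : ι → B) :
    ∑ i, v i • D (e i) = v := by
  simpa [he, ← Pi.single_smul] using Finset.univ_sum_single v

/-- The calculus determined by a twisted derivation `D` of `X` with twist `G`: its bimodule is the
free left `X`-module of row vectors, on which `X` acts from the right through `G`. -/
noncomputable def CovCalc.ofTwistedDerivation {D : X →ₗ[ℂ] Fin M → X}
    {G : X →ₐ[ℂ] Matrix (Fin M) (Fin M) X} (h : IsTwistedDerivation (AlgHom.id ℂ X) D G)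
    (he : ∀ k, D (e k) = Pi.single k 1) (hδ : IsComulRestriction comulX)
    {π : Matrix (Fin M) (Fin M) H}
    (hD : ∀ a, (comulX ∘ D a) ᵥ* π.map (Algebra.TensorProduct.includeLeft : H →ₐ[ℂ] H ⊗[ℂ] X) =
      fun j => (LinearMap.proj j ∘ₗ D).lTensor H (comulX a)) : CovCalc X comulX e where
  Γ := Fin M → X
  modR := twistedRightModule G
  comm := twistedRightModule_smulCommClass G
  d := D
  leibniz := h
  spanning := eq_top_iff.2 fun v _ => by
    rw [← sum_smul_apply_basis he v]
    exact sum_mem fun i _ => Submodule.subset_span ⟨v i, e i, rfl⟩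
  free v := ⟨v, (sum_smul_apply_basis he v).symm, fun c hc =>
    (hc.trans (sum_smul_apply_basis he c)).symm⟩
  covariant := by
    obtain ⟨δ, hδ⟩ := hδ.exists_algHom
    rw [← hδ] at hD
    obtain ⟨Δ, hΔ⟩ := exists_leftCoaction δ D π hD
    exact ⟨Δ, fun a b _ _ _ _ _ _ _ _ ha hb => hΔ (hδ ▸ ha) (hδ ▸ hb)⟩

end Construction

namespace CovCalc

variable (c : CovCalc X comulX e)

/-- The coordinates on `Γ` given by the left `X`-basis `d (e i)`. -/
noncomputable def coords : (Fin M → X) ≃ₗ[X] c.Γ :=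
  LinearEquiv.ofBijective (Fintype.linearCombination X fun i => c.d (e i))
    (Function.bijective_iff_existsUnique _ |>.2 fun ω => by
      simpa only [Fintype.linearCombination_apply, eq_comm] using c.free ω)

/-- The coefficient operators `∂_i` of the calculus, `d a = ∑ i, ∂_i a • d (e i)`, collected into a
row vector. -/
noncomputable def coeff : X →ₗ[ℂ] Fin M → X :=
  c.coords.symm.toLinearMap.restrictScalars ℂ ∘ₗ c.d

theorem coords_apply (u : Fin M → X) : c.coords u = ∑ i, u i • c.d (e i) := rfl

theorem coords_symm_d (a : X) : c.coords.symm (c.d a) = c.coeff a := rfl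

theorem coords_coeff (a : X) : c.coords (c.coeff a) = c.d a :=
  c.coords.apply_symm_apply _

theorem sum_coeff_smul (a : X) : ∑ i, c.coeff a i • c.d (e i) = c.d a :=
  c.coords_coeff a

theorem coeff_basis (k : Fin M) : c.coeff (e k) = Pi.single k 1 :=
  c.coords.symm_apply_eq.2 <| by simp [coords_apply, Pi.single_apply]

theorem d_one : c.d 1 = 0 := by
  simpa using c.leibniz 1 1

theorem coeff_one : c.coeff 1 = 0 := by
  rw [← coords_symm_d, d_one, map_zero]

theorem isTwistedDerivation_coeff :
    IsTwistedDerivation (AlgHom.id ℂ X) c.coeff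
      fun b => Matrix.of fun k => c.coords.symm (op b • c.d (e k)) := by
  intro a b
  have right_smul : op b • c.d a = ∑ k, c.coeff a k • op b • c.d (e k) := by
    rw [← c.sum_coeff_smul a, Finset.smul_sum]
    simp only [smul_comm]
  rw [← coords_symm_d, c.leibniz, right_smul, map_add, map_smul, map_sum]
  simp only [map_smul, Matrix.vecMul_eq_sum]
  rfl

/-- The linear forms `ε ∘ ∂_i` that the correspondence attaches to the calculus. -/
noncomputable def counitCoeff (i : Fin M) : X →ₗ[ℂ] ℂ :=
  ((Bialgebra.counitAlgHom ℂ H).comp X.val).toLinearMap ∘ₗ LinearMap.proj i ∘ₗ c.coeff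

theorem corr_iff {χ : Fin M → (X →ₗ[ℂ] ℂ)} : Corr c χ ↔ χ = c.counitCoeff := by
  constructor
  · intro h
    ext i a
    exact h a (c.coeff a) (c.sum_coeff_smul a).symm i
  · rintro rfl a u hu i
    rw [← coords_apply] at hu
    obtain rfl : c.coeff a = u := by rw [← coords_symm_d, hu, LinearEquiv.symm_apply_apply]
    rfl

theorem counitCoeff_basis (i j : Fin M) : c.counitCoeff i (e j) = if i = j then 1 else 0 := by
  simp [counitCoeff, coeff_basis, Pi.single_apply, apply_ite]

theorem counitCoeff_one (i : Fin M) : c.counitCoeff i 1 = 0 := by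
  simp [counitCoeff, coeff_one]

theorem isRightCoideal_counitCoeff :
    IsRightCoideal (Submodule.span ℂ
      ({((Bialgebra.counitAlgHom ℂ H).comp X.val).toLinearMap} ∪ Set.range c.counitCoeff)) := by
  obtain ⟨G, hG⟩ := c.isTwistedDerivation_coeff.exists_algHom c.coeff_basis c.coeff_one
  let ε := (Bialgebra.counitAlgHom ℂ H).comp X.val
  have h : IsTwistedDerivation (AlgHom.id ℂ X) c.coeff G := hG ▸ c.isTwistedDerivation_coeff
  exact IsTwistedDerivation.isRightCoideal (G := ε.mapMatrix.comp G) (h.map (ε : X →+* ℂ))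

theorem coeff_eq_partialDeriv {π : Matrix (Fin M) (Fin M) H} (hδ : IsComulRestriction comulX)
    (he : ∀ i, comulX (e i) = ∑ j, π i j ⊗ₜ e j) (hπ : IsMatrixCorepresentation ℂ π) (a : X) :
    X.val ∘ c.coeff a = partialDeriv comulX c.counitCoeff π a := by
  obtain ⟨Δ, hΔ⟩ := c.covariant
  let L (j : Fin M) : c.Γ →ₗ[ℂ] H := tensorSlice H
    (((Bialgebra.counitAlgHom ℂ H).comp X.val).toLinearMap ∘ₗ LinearMap.proj j ∘ₗ
      c.coords.symm.toLinearMap.restrictScalars ℂ) ∘ₗ Δ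
  have L_smul_d (a b : X) (j : Fin M) :
      L j (a • c.d b) = a * tensorSlice H (c.counitCoeff j) (comulX b) := by
    obtain ⟨m, a1, a2, ha⟩ := TensorProduct.exists_sum_tmul_eq (comulX a)
    obtain ⟨n, b1, b2, hb⟩ := TensorProduct.exists_sum_tmul_eq (comulX b)
    conv_rhs => rw [← hδ.tensorSlice_counit a]
    simp only [L, LinearMap.comp_apply, hΔ a b _ _ _ _ a1 a2 b1 b2 ha hb, ha, hb, map_sum,
      tensorSlice_tmul, Finset.sum_mul_sum]
    simp [counitCoeff, coords_symm_d, smul_smul, mul_comm]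
  refine (eq_partialDeriv_iff hπ).2 ?_
  ext j
  have L_basis (x : X) (i : Fin M) : L j (x • c.d (e i)) = x * π i j := by
    simp [L_smul_d, he, counitCoeff_basis]
  have h := congrArg (L j) (c.sum_coeff_smul a)
  have L_d := L_smul_d 1 a j
  rw [one_smul, OneMemClass.coe_one, one_mul] at L_d
  rw [map_sum, L_d] at h
  simpa [L_basis, Matrix.vecMul, dotProduct] using h

theorem coeff_ofTwistedDerivation {D : X →ₗ[ℂ] Fin M → X}
    {G : X →ₐ[ℂ] Matrix (Fin M) (Fin M) X} (h : IsTwistedDerivation (AlgHom.id ℂ X) D G)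
    (he : ∀ k, D (e k) = Pi.single k 1) (hδ : IsComulRestriction comulX)
    {π : Matrix (Fin M) (Fin M) H}
    (hD : ∀ a, (comulX ∘ D a) ᵥ* π.map (Algebra.TensorProduct.includeLeft : H →ₐ[ℂ] H ⊗[ℂ] X) =
      fun j => (LinearMap.proj j ∘ₗ D).lTensor H (comulX a)) :
    (ofTwistedDerivation h he hδ hD).coeff = D :=
  LinearMap.ext fun a => (coords _).symm_apply_eq.2 (sum_smul_apply_basis he (D a)).symm

theorem op_smul_smul_d (a b y : X) :
    op y • (a • c.d b) = a • c.d (b * y) - (a * b) • c.d y := by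
  rw [← smul_comm, c.leibniz, smul_add, mul_smul, add_sub_cancel_left]

theorem iso_of_coeff_eq {c c' : CovCalc X comulX e} (h : c.coeff = c'.coeff) : c.Iso c' := by
  let ψ := c.coords.symm ≪≫ₗ c'.coords
  have ψ_d (a : X) : ψ (c.d a) = c'.d a := by
    rw [LinearEquiv.trans_apply, coords_symm_d, h, coords_coeff]
  have ψ_op_smul (y : X) (x : c.Γ) : ψ (op y • x) = op y • ψ x := by
    induction (c.spanning ▸ Submodule.mem_top : x ∈ Submodule.span ℂ _) using
      Submodule.span_induction with
    | mem x hx =>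
      obtain ⟨a, b, rfl⟩ := hx
      rw [op_smul_smul_d, map_sub, ψ.map_smul, ψ.map_smul, ψ.map_smul, ψ_d, ψ_d, ψ_d,
        op_smul_smul_d]
    | zero => simp
    | add x x' _ _ hx hx' => simp only [smul_add, map_add, hx, hx']
    | smul z x _ hx =>
      rw [← algebraMap_smul X z x, ← smul_comm, ψ.map_smul, hx, ψ.map_smul, smul_comm]
  exact ⟨ψ.restrictScalars ℂ, ψ_d, ψ.map_smul, ψ_op_smul⟩

end CovCalc

section Classification

variable {χ : Fin M → (X →ₗ[ℂ] ℂ)} {π : Matrix (Fin M) (Fin M) H}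

theorem goodChi_iff : GoodChi X comulX e π χ ↔
    (∀ i j, χ i (e j) = if i = j then 1 else 0) ∧ (∀ i, χ i 1 = 0) ∧
    IsRightCoideal (Submodule.span ℂ
      ({((Bialgebra.counitAlgHom ℂ H).comp X.val).toLinearMap} ∪ Set.range χ)) ∧
    ∀ a i, partialDeriv comulX χ π a i ∈ X := by
  refine and_congr_right' <| and_congr_right' <| and_congr Iff.rfl <| forall₂_congr fun a i => ?_
  constructor
  · intro h
    obtain ⟨n, a1, a2, ha⟩ := TensorProduct.exists_sum_tmul_eq (comulX a)
    exact partialDeriv_apply_eq_sum ha i ▸ h (Fin n) inferInstance a1 a2 ha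
  · intro h _ _ a1 a2 ha
    exact partialDeriv_apply_eq_sum ha i ▸ h

theorem CovCalc.goodChi_counitCoeff (c : CovCalc X comulX e) (hδ : IsComulRestriction comulX)
    (he : ∀ i, comulX (e i) = ∑ j, π i j ⊗ₜ e j) (hπ : IsMatrixCorepresentation ℂ π) :
    GoodChi X comulX e π c.counitCoeff :=
  goodChi_iff.2 ⟨c.counitCoeff_basis, c.counitCoeff_one, c.isRightCoideal_counitCoeff,
    fun a i => congrFun (c.coeff_eq_partialDeriv hδ he hπ a) i ▸ (c.coeff a i).2⟩

theorem GoodChi.exists_isTwistedDerivation (h : GoodChi X comulX e π χ)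
    (hδ : IsComulRestriction comulX) (hπ : IsMatrixCorepresentation ℂ π) :
    ∃ G, IsTwistedDerivation X.val (partialDeriv comulX χ π) G := by
  obtain ⟨hχ, h_one, hV, -⟩ := goodChi_iff.1 h
  obtain ⟨G, hG⟩ := hV.exists_isTwistedDerivation h_one
  obtain ⟨G, rfl⟩ := hG.exists_algHom (D := LinearMap.pi χ) (e := e)
    (fun k => funext fun i => by simp [hχ, Pi.single_apply]) (funext h_one)
  exact exists_isTwistedDerivation_partialDeriv hπ hδ (G := G.toLinearMap) hG

theorem GoodChi.exists_corr (h : GoodChi X comulX e π χ) (hδ : IsComulRestriction comulX)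
    (he : ∀ i, comulX (e i) = ∑ j, π i j ⊗ₜ e j) (hπ : IsMatrixCorepresentation ℂ π) :
    ∃ c : CovCalc X comulX e, Corr c χ := by
  obtain ⟨hχ, h_one, -, h_mem⟩ := goodChi_iff.1 h
  let D : X →ₗ[ℂ] Fin M → X := LinearMap.pi fun i =>
    (LinearMap.proj i ∘ₗ partialDeriv comulX χ π).codRestrict X.toSubmodule fun a => h_mem a i
  have D_val (a : X) (i : Fin M) : (D a i : H) = partialDeriv comulX χ π a i := rfl
  have D_basis (k : Fin M) : D (e k) = Pi.single k 1 := by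
    ext i
    rw [D_val, partialDeriv_apply_basis hπ he hχ, Pi.single_apply, Pi.single_apply]
    split <;> rfl
  have D_one : D 1 = 0 := by
    ext i
    rw [D_val, partialDeriv_one hδ h_one]
    rfl
  obtain ⟨G, hG⟩ := h.exists_isTwistedDerivation hδ hπ
  have D_twisted := IsTwistedDerivation.of_injective_comp (φ := AlgHom.id ℂ X) (D := D)
    (f := (X.val : X →+* H)) Subtype.val_injective hG D_basis
  obtain ⟨G', hG'⟩ := D_twisted.exists_algHom D_basis D_one
  let c : CovCalc X comulX e := .ofTwistedDerivation (hG' ▸ D_twisted) D_basis hδ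
    (vecMul_includeLeft_eq_lTensor hπ hδ D_val)
  refine ⟨c, c.corr_iff.2 ?_⟩
  ext i a
  rw [← counit_partialDeriv hπ hδ a i, ← D_val, CovCalc.counitCoeff,
    CovCalc.coeff_ofTwistedDerivation]
  rfl

theorem CovCalc.iso_of_counitCoeff_eq {c c' : CovCalc X comulX e}
    (h : c.counitCoeff = c'.counitCoeff) (hδ : IsComulRestriction comulX)
    (he : ∀ i, comulX (e i) = ∑ j, π i j ⊗ₜ e j) (hπ : IsMatrixCorepresentation ℂ π) :
    c.Iso c' :=
  iso_of_coeff_eq <| LinearMap.ext fun a => Subtype.val_injective.comp_left <| by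
    change X.val ∘ c.coeff a = X.val ∘ c'.coeff a
    rw [c.coeff_eq_partialDeriv hδ he hπ, c'.coeff_eq_partialDeriv hδ he hπ, h]

end Classification

/-- classification theorem: the assignment `(Γ, d) ↦ {ε∘∂_1, …, ε∘∂_M}`
is a one-to-one correspondence between covariant free first order differential calculi
on `X` (up to isomorphism) and families `{χ_1, …, χ_M} ⊆ X°` satisfying the conditions
of `GoodChi`. -/
theorem stmt6
    (hcomulX : ∀ a : X,
      (TensorProduct.map (LinearMap.id) X.val.toLinearMap) (comulX a)
        = Coalgebra.comul (R := ℂ) (a : H))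
    (π : Fin M → Fin M → H)
    (hπ : ∀ i, comulX (e i) = ∑ j, π i j ⊗ₜ[ℂ] e j)
    (hΔπ : ∀ i j, Coalgebra.comul (R := ℂ) (π i j) = ∑ k, π i k ⊗ₜ[ℂ] π k j)
    (hεπ : ∀ i j, Coalgebra.counit (R := ℂ) (π i j) = if i = j then 1 else 0) :
    -- the assignment is well defined and lands in the good families
    (∀ c : CovCalc X comulX e, ∃ χ, Corr c χ ∧ GoodChi X comulX e π χ) ∧
    -- surjectivity: every good family arises from a calculus
    (∀ χ, GoodChi X comulX e π χ → ∃ c : CovCalc X comulX e, Corr c χ) ∧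
    -- injectivity up to isomorphism
    (∀ (c c' : CovCalc X comulX e) (χ : Fin M → (X →ₗ[ℂ] ℂ)),
      GoodChi X comulX e π χ → Corr c χ → Corr c' χ → c.Iso c') := by
  have hπ' : IsMatrixCorepresentation ℂ π := ⟨hΔπ, hεπ⟩
  refine ⟨fun c => ?_, fun χ hχ => ?_, fun c c' χ _ hc hc' => ?_⟩
  · exact ⟨c.counitCoeff, c.corr_iff.2 rfl, c.goodChi_counitCoeff hcomulX hπ hπ'⟩
  · exact hχ.exists_corr hcomulX hπ hπ'
  · exact CovCalc.iso_of_counitCoeff_eq ((c.corr_iff.1 hc).symm.trans (c'.corr_iff.1 hc'))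
      hcomulX hπ hπ'
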